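/- Let f ∈ C_b^4(ℝ^d) be a bounded probability density and let K be a kernel on ℝ^d satisfying (K0)–(K2) with μ₄ > μ₂₂ > 0, and η := μ₄ + (d−1)μ₂₂ − d > 0. Define the polynomials p₀(z) := 1 − η^{−1}(‖z‖² − d), p_j(z) := z_j, and p_{jk}(z) := μ₂₂^{−1} z_j z_k for j ≠ k, p_{jj}(z) := 2(μ₄ − μ₂₂)^{−1}( z_j² − 1 − (μ₂₂ − 1) η^{−1}(‖z‖² − d) ). Fix x_o ∈ ℝ^d. Then for all sequences h_n → 0+ and x_n → x_o: (i) ∫ K(z) p₀(z) f(x_n + h_n z) dz = f(x_n) + h_n⁴ β(x_o) + o(h_n⁴), where β(x_o) := (1/24) ∫ K(z) p₀(z) D⁴f(x_o; z) dz; (ii) for each j, ∫ K(z) z_j f(x_n + h_n z) dz = h_n f^{(e_j)}(x_n) + h_n³ β_j(x_o) + o(h_n³), where β_j(x_o) := (1/6) ∫ K(z) z_j D³f(x_o; z) dz; (iii) for each j,k, ∫ K(z) p_{jk}(z) f(x_n + h_n z) dz = h_n² f^{(e_j + e_k)}(x_n) + h_n⁴ B_{jk}(x_o) + o(h_n⁴),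 where B_{jk}(x_o) := (1/24) ∫ K(z) p_{jk}(z) D⁴f(x_o; z) dz. -/

import Mathlib

open MeasureTheory Filter Topology

noncomputable section

/-- `ℝ^d` as a pi type; `volume` is `d`-dimensional Lebesgue measure. -/
abbrev Vec (d : ℕ) := Fin d → ℝ

/-- The Euclidean norm on `ℝ^d`. -/
def euclNorm {d : ℕ} (z : Vec d) : ℝ := Real.sqrt (∑ i, z i ^ 2)

/-- The `k`-th directional derivative `D^k g(x; z)`. -/
noncomputable def dirDeriv {d : ℕ} (k : ℕ) (g : Vec d → ℝ) (x z : Vec d) : ℝ :=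
  iteratedFDeriv ℝ k g x fun _ => z

/-!
Taylor's formula with integral remainder and dominated convergence expand
`∫ K(z) p(z) f(x + h z) dz` in powers of `h` with coefficients `(1/k!) ∫ K(z) p(z) D^k f(x; z) dz`,
up to an error `o(h^m)` that is uniform in `x` near `x_o`. Since `K` is even, every second
coefficient vanishes by parity of `p`. The remaining ones below the leading error term are moments
of `K` of order at most four, and flipping the sign of one coordinate shows that the only nonzero
ones of order four are `μ₄` and `μ₂₂`. The polynomials `p₀` and `p_{jk}` solve the resulting linear
moment equations; they are well defined because `d η = ∫ K(z) (‖z‖² - d)² dz`, which is positive as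
spheres are null sets.
-/

open Finset MvPolynomial
open scoped Nat

section NormPow

variable {E F : Type*} [NormedAddCommGroup E] [NormedAddCommGroup F] [NormedSpace ℝ F] {k : ℕ}
  {C : ℝ}

theorem norm_smul_le_mul_norm_pow_mul {z : E} {v : F} (a : ℝ) (hv : ‖v‖ ≤ C * ‖z‖ ^ k) :
    ‖a • v‖ ≤ C * ‖‖z‖ ^ k * a‖ := by
  calc ‖a • v‖ ≤ ‖a‖ * (C * ‖z‖ ^ k) := by rw [norm_smul]; gcongr
    _ = C * ‖‖z‖ ^ k * a‖ := by rw [norm_mul, norm_pow, norm_norm]; ring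

theorem integrable_smul_of_norm_le_mul_norm_pow [MeasurableSpace E] {μ : Measure E} {w : E → ℝ}
    {g : E → F} (hw : Integrable (fun z ↦ ‖z‖ ^ k * w z) μ) (hwm : AEStronglyMeasurable w μ)
    (hg : AEStronglyMeasurable g μ) (hgC : ∀ z, ‖g z‖ ≤ C * ‖z‖ ^ k) :
    Integrable (fun z ↦ w z • g z) μ :=
  (hw.norm.const_mul C).mono' (hwm.smul hg)
    (ae_of_all _ fun z ↦ norm_smul_le_mul_norm_pow_mul (w z) (hgC z))

end NormPow

section Taylor

variable {E F : Type*} [NormedAddCommGroup E] [NormedSpace ℝ E] [NormedAddCommGroup F]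
  [NormedSpace ℝ F]

/-- The integral remainder of order `n + 1` in the Taylor expansion of `f` at `x` in direction
`h • z`, divided by `h ^ (n + 1)`. This form of the quotient makes sense at `h = 0` too, and is
continuous there. -/
def scaledTaylorRemainder (f : E → F) (n : ℕ) (x z : E) (h : ℝ) : F :=
  (n ! : ℝ)⁻¹ •
    ∫ t in (0 : ℝ)..1, (1 - t) ^ n • iteratedFDeriv ℝ (n + 1) f (x + t • h • z) fun _ ↦ z

variable {f : E → F} {n : ℕ} {ι : Type*} {l : Filter ι} {h : ι → ℝ} {x : ι → E} {x₀ : E}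

theorem iteratedFDeriv_apply_const_smul (k : ℕ) (x z : E) (c : ℝ) :
    (iteratedFDeriv ℝ k f x fun _ ↦ c • z) = c ^ k • iteratedFDeriv ℝ k f x fun _ ↦ z := by
  simpa using (iteratedFDeriv ℝ k f x).map_smul_univ (fun _ ↦ c) fun _ ↦ z

theorem map_add_smul_eq_sum_add_scaledTaylorRemainder [CompleteSpace F]
    (hf : ContDiff ℝ (n + 1) f) (x z : E) (h : ℝ) :
    f (x + h • z) = ∑ k ∈ range (n + 1), ((k ! : ℝ)⁻¹ * h ^ k) • (iteratedFDeriv ℝ k f x fun _ ↦ z)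
      + h ^ (n + 1) • scaledTaylorRemainder f n x z h := by
  rw [map_add_eq_sum_add_integral_iteratedFDeriv fun _ _ ↦ hf.contDiffAt]
  simp only [iteratedFDeriv_apply_const_smul, scaledTaylorRemainder, smul_comm _ (h ^ (n + 1)),
    intervalIntegral.integral_smul, mul_smul]

theorem continuous_scaledTaylorRemainder (hf : ContDiff ℝ (n + 1) f) :
    Continuous fun q : E × E × ℝ ↦ scaledTaylorRemainder f n q.1 q.2.1 q.2.2 := by
  have : Continuous (iteratedFDeriv ℝ (n + 1) f) :=
    hf.continuous_iteratedFDeriv (by norm_cast)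
  unfold scaledTaylorRemainder
  refine .const_smul
    (intervalIntegral.continuous_parametric_intervalIntegral_of_continuous' ?_ 0 1) _
  fun_prop

theorem scaledTaylorRemainder_zero [CompleteSpace F] (x z : E) :
    scaledTaylorRemainder f n x z 0 =
      ((n + 1)! : ℝ)⁻¹ • iteratedFDeriv ℝ (n + 1) f x fun _ ↦ z := by
  have hpow : ∫ t in (0 : ℝ)..1, (1 - t) ^ n = ((n : ℝ) + 1)⁻¹ := by
    simp [intervalIntegral.integral_comp_sub_left (fun t : ℝ ↦ t ^ n)]
  simp only [scaledTaylorRemainder, zero_smul, smul_zero, add_zero,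
    intervalIntegral.integral_smul_const, hpow, smul_smul, Nat.factorial_succ]
  push_cast
  rw [mul_inv_rev]

theorem tendsto_scaledTaylorRemainder [CompleteSpace F] (hf : ContDiff ℝ (n + 1) f)
    (hh : Tendsto h l (𝓝 0)) (hx : Tendsto x l (𝓝 x₀)) (z : E) :
    Tendsto (fun i ↦ scaledTaylorRemainder f n (x i) z (h i)) l
      (𝓝 (((n + 1)! : ℝ)⁻¹ • iteratedFDeriv ℝ (n + 1) f x₀ fun _ ↦ z)) := by
  have hcurve : Tendsto (fun i ↦ (x i, z, h i)) l (𝓝 (x₀, z, 0)) :=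
    hx.prodMk_nhds (tendsto_const_nhds.prodMk_nhds hh)
  have hlim := ((continuous_scaledTaylorRemainder hf).tendsto (x₀, z, 0)).comp hcurve
  rwa [scaledTaylorRemainder_zero] at hlim

theorem norm_scaledTaylorRemainder_le {C : ℝ} (hC : ∀ y, ‖iteratedFDeriv ℝ (n + 1) f y‖ ≤ C)
    (x z : E) (h : ℝ) : ‖scaledTaylorRemainder f n x z h‖ ≤ C * ‖z‖ ^ (n + 1) := by
  have hfac : ‖(n ! : ℝ)⁻¹‖ ≤ 1 := by
    simpa using inv_le_one_of_one_le₀ (Nat.one_le_cast.2 n.factorial_pos)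
  have hint : ∀ t ∈ Set.uIoc (0 : ℝ) 1,
      ‖(1 - t) ^ n • iteratedFDeriv ℝ (n + 1) f (x + t • h • z) fun _ ↦ z‖
        ≤ C * ‖z‖ ^ (n + 1) := by
    intro t ht
    rw [Set.uIoc_of_le zero_le_one] at ht
    have hpow : ‖(1 - t) ^ n‖ ≤ 1 := by
      rw [norm_pow, Real.norm_of_nonneg (by linarith [ht.2])]
      exact pow_le_one₀ (by linarith [ht.2]) (by linarith [ht.1])
    have hop := ((iteratedFDeriv ℝ (n + 1) f (x + t • h • z)).le_of_opNorm_le (hC _) fun _ ↦ z)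
    rw [norm_smul]
    exact (mul_le_of_le_one_left (norm_nonneg _) hpow).trans (by simpa using hop)
  calc ‖scaledTaylorRemainder f n x z h‖ ≤ 1 * (C * ‖z‖ ^ (n + 1) * |1 - 0|) := by
        rw [scaledTaylorRemainder, norm_smul]
        gcongr
        exact intervalIntegral.norm_integral_le_of_norm_le_const hint
    _ = C * ‖z‖ ^ (n + 1) := by simp

variable [MeasurableSpace E] [OpensMeasurableSpace E] [SecondCountableTopologyEither E F]
  {μ : Measure E} {w : E → ℝ}

theorem integrable_smul_iteratedFDeriv {k : ℕ} (hw : Integrable (fun z ↦ ‖z‖ ^ k * w z) μ)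
    (hwm : AEStronglyMeasurable w μ) (x : E) :
    Integrable (fun z ↦ w z • iteratedFDeriv ℝ k f x fun _ ↦ z) μ :=
  integrable_smul_of_norm_le_mul_norm_pow hw hwm
    (by fun_prop : Continuous fun z ↦ iteratedFDeriv ℝ k f x fun _ ↦ z).aestronglyMeasurable
    fun z ↦ by simpa using (iteratedFDeriv ℝ k f x).le_opNorm fun _ ↦ z

theorem aestronglyMeasurable_scaledTaylorRemainder (hf : ContDiff ℝ (n + 1) f) (x : E) (h : ℝ) :
    AEStronglyMeasurable (fun z ↦ scaledTaylorRemainder f n x z h) μ := by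
  have hcurve : Continuous fun z : E ↦ (x, z, h) := by fun_prop
  exact ((continuous_scaledTaylorRemainder hf).comp hcurve).aestronglyMeasurable

theorem integrable_smul_scaledTaylorRemainder {C : ℝ} (hf : ContDiff ℝ (n + 1) f)
    (hC : ∀ y, ‖iteratedFDeriv ℝ (n + 1) f y‖ ≤ C)
    (hw : Integrable (fun z ↦ ‖z‖ ^ (n + 1) * w z) μ) (hwm : AEStronglyMeasurable w μ)
    (x : E) (h : ℝ) : Integrable (fun z ↦ w z • scaledTaylorRemainder f n x z h) μ :=
  integrable_smul_of_norm_le_mul_norm_pow hw hwm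
    (aestronglyMeasurable_scaledTaylorRemainder hf x h) fun z ↦
      norm_scaledTaylorRemainder_le hC x z h

variable [CompleteSpace F] {C : ℝ}

theorem integral_smul_comp_add_smul (hf : ContDiff ℝ (n + 1) f)
    (hC : ∀ y, ‖iteratedFDeriv ℝ (n + 1) f y‖ ≤ C)
    (hw : ∀ k ≤ n + 1, Integrable (fun z ↦ ‖z‖ ^ k * w z) μ) (hwm : AEStronglyMeasurable w μ)
    (x : E) (h : ℝ) :
    ∫ z, w z • f (x + h • z) ∂μ =
      ∑ k ∈ range (n + 1), ((k ! : ℝ)⁻¹ * h ^ k) • ∫ z, w z • (iteratedFDeriv ℝ k f x fun _ ↦ z) ∂μ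
        + h ^ (n + 1) • ∫ z, w z • scaledTaylorRemainder f n x z h ∂μ := by
  have hterm : ∀ k ∈ range (n + 1), Integrable
      (fun z ↦ ((k ! : ℝ)⁻¹ * h ^ k) • w z • iteratedFDeriv ℝ k f x fun _ ↦ z) μ := fun k hk ↦
    (integrable_smul_iteratedFDeriv (hw k (mem_range.1 hk).le) hwm x).smul _
  have hrem : Integrable (fun z ↦ h ^ (n + 1) • w z • scaledTaylorRemainder f n x z h) μ :=
    (integrable_smul_scaledTaylorRemainder hf hC (hw _ le_rfl) hwm x h).smul _
  simp only [← integral_smul]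
  rw [← integral_finsetSum _ hterm, ← integral_add (integrable_finsetSum _ hterm) hrem]
  refine integral_congr_ae (ae_of_all _ fun z ↦ ?_)
  simp only [map_add_smul_eq_sum_add_scaledTaylorRemainder hf x z h, smul_add, Finset.smul_sum,
    smul_comm (w z)]

theorem tendsto_integral_smul_scaledTaylorRemainder [l.IsCountablyGenerated]
    (hf : ContDiff ℝ (n + 1) f) (hC : ∀ y, ‖iteratedFDeriv ℝ (n + 1) f y‖ ≤ C)
    (hw : Integrable (fun z ↦ ‖z‖ ^ (n + 1) * w z) μ) (hwm : AEStronglyMeasurable w μ)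
    (hh : Tendsto h l (𝓝 0)) (hx : Tendsto x l (𝓝 x₀)) :
    Tendsto (fun i ↦ ∫ z, w z • scaledTaylorRemainder f n (x i) z (h i) ∂μ) l
      (𝓝 (((n + 1)! : ℝ)⁻¹ • ∫ z, w z • (iteratedFDeriv ℝ (n + 1) f x₀ fun _ ↦ z) ∂μ)) := by
  simp only [← integral_smul, smul_comm ((n + 1)! : ℝ)⁻¹]
  refine tendsto_integral_filter_of_dominated_convergence (fun z ↦ C * ‖‖z‖ ^ (n + 1) * w z‖)
    (.of_forall fun i ↦ hwm.smul (aestronglyMeasurable_scaledTaylorRemainder hf (x i) (h i)))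
    (.of_forall fun i ↦ ae_of_all _ fun z ↦ ?_) (hw.norm.const_mul C)
    (ae_of_all _ fun z ↦ (tendsto_scaledTaylorRemainder hf hh hx z).const_smul (w z))
  exact norm_smul_le_mul_norm_pow_mul (w z) (norm_scaledTaylorRemainder_le hC (x i) z (h i))

theorem tendsto_integral_taylor_remainder [l.IsCountablyGenerated]
    (hf : ContDiff ℝ (n + 1) f) (hC : ∀ y, ‖iteratedFDeriv ℝ (n + 1) f y‖ ≤ C)
    (hw : ∀ k ≤ n + 1, Integrable (fun z ↦ ‖z‖ ^ k * w z) μ)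
    (hh : Tendsto h l (𝓝[≠] 0)) (hx : Tendsto x l (𝓝 x₀)) :
    Tendsto (fun i ↦ (h i ^ (n + 1))⁻¹ • (∫ z, w z • f (x i + h i • z) ∂μ -
        ∑ k ∈ range (n + 1), ((k ! : ℝ)⁻¹ * h i ^ k) •
          ∫ z, w z • (iteratedFDeriv ℝ k f (x i) fun _ ↦ z) ∂μ)) l
      (𝓝 (((n + 1)! : ℝ)⁻¹ • ∫ z, w z • (iteratedFDeriv ℝ (n + 1) f x₀ fun _ ↦ z) ∂μ)) := by
  have hwm : AEStronglyMeasurable w μ := by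
    simpa using (hw 0 (Nat.zero_le _)).aestronglyMeasurable
  obtain ⟨hh₀, hh_ne⟩ := tendsto_nhdsWithin_iff.1 hh
  refine (tendsto_integral_smul_scaledTaylorRemainder hf hC (hw _ le_rfl) hwm hh₀ hx).congr'
    (hh_ne.mono fun i hi ↦ ?_)
  beta_reduce
  rw [integral_smul_comp_add_smul hf hC hw hwm, add_sub_cancel_left,
    inv_smul_smul₀ (pow_ne_zero _ hi)]

end Taylor

/-- A weight `w` all of whose absolute moments `∫ ‖z‖ ^ k * |w z|` are finite. -/
def HasFiniteMoments {E : Type*} [NormedAddCommGroup E] [MeasurableSpace E] (w : E → ℝ)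
    (μ : Measure E) : Prop :=
  ∀ k : ℕ, Integrable (fun z ↦ ‖z‖ ^ k * w z) μ

/-- Invariance of a function on `ℝ^σ` under changes of sign of the coordinates. -/
def IsSignInvariant {σ : Type*} (w : (σ → ℝ) → ℝ) : Prop :=
  ∀ ξ : σ → ℝ, (∀ i, ξ i = 1 ∨ ξ i = -1) → ∀ z, w (ξ * z) = w z

theorem IsSignInvariant.even {σ : Type*} {w : (σ → ℝ) → ℝ} (hw : IsSignInvariant w) :
    Function.Even w := fun z ↦ by
  simpa using hw (-1) (fun _ ↦ .inr rfl) z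

section Moments

variable {σ : Type*} [Fintype σ] {μ : Measure (σ → ℝ)} {w v : (σ → ℝ) → ℝ}

namespace HasFiniteMoments

theorem integrable (hw : HasFiniteMoments w μ) : Integrable w μ := by simpa using hw 0

theorem add (hw : HasFiniteMoments w μ) (hv : HasFiniteMoments v μ) :
    HasFiniteMoments (fun z ↦ w z + v z) μ := fun k ↦ by
  simp only [mul_add]
  exact (hw k).add (hv k)

theorem mul_const (hw : HasFiniteMoments w μ) (c : ℝ) :
    HasFiniteMoments (fun z ↦ w z * c) μ := fun k ↦ by
  simpa only [mul_assoc] using (hw k).mul_const c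

theorem mul_coord (hw : HasFiniteMoments w μ) (i : σ) :
    HasFiniteMoments (fun z ↦ w z * z i) μ := fun k ↦ by
  have hmeas : AEStronglyMeasurable (fun z : σ → ℝ ↦ ‖z‖ ^ k * (w z * z i)) μ :=
    (continuous_norm.pow k).aestronglyMeasurable.mul
      (hw.integrable.aestronglyMeasurable.mul (continuous_apply i).aestronglyMeasurable)
  refine (hw (k + 1)).norm.mono' hmeas (ae_of_all _ fun z ↦ ?_)
  calc ‖‖z‖ ^ k * (w z * z i)‖ = ‖z‖ ^ k * ‖w z‖ * ‖z i‖ := by simp [mul_assoc]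
    _ ≤ ‖z‖ ^ k * ‖w z‖ * ‖z‖ := by gcongr; exact norm_le_pi_norm z i
    _ = ‖‖z‖ ^ (k + 1) * w z‖ := by rw [norm_mul, norm_pow, norm_norm]; ring

theorem mul_eval (hw : HasFiniteMoments w μ) (p : MvPolynomial σ ℝ) :
    HasFiniteMoments (fun z ↦ w z * eval z p) μ := by
  induction p using MvPolynomial.induction_on with
  | C c => simpa using hw.mul_const c
  | add p q hp hq => simpa [mul_add] using hp.add hq
  | mul_X p i hp => simpa [mul_assoc] using hp.mul_coord i

theorem integrable_mul_eval (hw : HasFiniteMoments w μ) (p : MvPolynomial σ ℝ) :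
    Integrable (fun z ↦ w z * eval z p) μ :=
  (hw.mul_eval p).integrable

/-- The moment functional `p ↦ ∫ w p` on polynomials. -/
def moment (hw : HasFiniteMoments w μ) : MvPolynomial σ ℝ →ₗ[ℝ] ℝ where
  toFun p := ∫ z, w z * eval z p ∂μ
  map_add' p q := by
    simpa [mul_add] using integral_add (hw.integrable_mul_eval p) (hw.integrable_mul_eval q)
  map_smul' c p := by
    simp [mul_left_comm (w _), integral_const_mul]

theorem moment_apply (hw : HasFiniteMoments w μ) (p : MvPolynomial σ ℝ) :
    hw.moment p = ∫ z, w z * eval z p ∂μ := rfl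

end HasFiniteMoments

theorem measurePreserving_mul_left_of_sign {ξ : σ → ℝ} (hξ : ∀ i, ξ i = 1 ∨ ξ i = -1) :
    MeasurePreserving (fun z : σ → ℝ ↦ ξ * z) := by
  refine volume_preserving_pi (f := fun i t ↦ ξ i * t) fun i ↦ ?_
  rcases hξ i with h | h
  · simp only [h, one_mul]
    exact MeasurePreserving.id _
  · simpa [h] using Measure.measurePreserving_neg (volume : Measure ℝ)

namespace IsSignInvariant

theorem integral_mul_eq_zero (hw : IsSignInvariant w) {ξ : σ → ℝ}
    (hξ : ∀ i, ξ i = 1 ∨ ξ i = -1) {g : (σ → ℝ) → ℝ} (hg : ∀ z, g (ξ * z) = -g z) :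
    ∫ z, w z * g z = 0 := by
  have hinv : Function.Involutive fun z : σ → ℝ ↦ ξ * z := fun z ↦ by
    ext i
    rcases hξ i with h | h <;> simp [h]
  have hmp := measurePreserving_mul_left_of_sign hξ
  have hcomp : ∫ z, w (ξ * z) * g (ξ * z) = ∫ z, w z * g z :=
    hmp.integral_comp (MeasurableEquiv.ofInvolutive _ hinv hmp.measurable).measurableEmbedding
      fun z ↦ w z * g z
  simp only [hw ξ hξ, hg, mul_neg, integral_neg] at hcomp
  linarith

variable [DecidableEq σ]

theorem moment_eq_zero (hw : IsSignInvariant w) (hm : HasFiniteMoments w volume) (i : σ)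
    {p : MvPolynomial σ ℝ} (hp : ∀ z, eval (Function.update (1 : σ → ℝ) i (-1) * z) p = -eval z p) :
    hm.moment p = 0 :=
  hw.integral_mul_eq_zero (fun j ↦ by by_cases h : j = i <;> simp [h]) hp

theorem moment_sq_mul_X_mul_X (hw : IsSignInvariant w) (hm : HasFiniteMoments w volume)
    {μ₄ μ₂₂ : ℝ} (h₄ : ∀ i, hm.moment (X i ^ 4) = μ₄)
    (h₂₂ : ∀ i j, i ≠ j → hm.moment (X i ^ 2 * X j ^ 2) = μ₂₂) (i a b : σ) :
    hm.moment (X i ^ 2 * (X a * X b)) = if a = b then if i = a then μ₄ else μ₂₂ else 0 := by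
  rcases eq_or_ne a b with rfl | hab
  · rw [← sq, if_pos rfl]
    split_ifs with hia
    · rw [hia, ← pow_add, h₄]
    · exact h₂₂ i a hia
  · rw [if_neg hab]
    exact hw.moment_eq_zero hm a fun z ↦ by
      rcases eq_or_ne i a with rfl | hia <;> simp [hab.symm, *]

theorem moment_X_mul_X_mul_X_mul_X (hw : IsSignInvariant w) (hm : HasFiniteMoments w volume)
    {μ₂₂ : ℝ} (h₂₂ : ∀ i j, i ≠ j → hm.moment (X i ^ 2 * X j ^ 2) = μ₂₂) {j k : σ} (hjk : j ≠ k)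
    (a b : σ) :
    hm.moment (X j * X k * (X a * X b)) =
      μ₂₂ * ((if a = j ∧ b = k then 1 else 0) + if a = k ∧ b = j then 1 else 0) := by
  have hkj := hjk.symm
  by_cases hj : a ≠ j ∧ b ≠ j
  · rw [hw.moment_eq_zero hm j fun z ↦ by simp [hj, hkj]]
    simp [hj]
  by_cases hk : a ≠ k ∧ b ≠ k
  · rw [hw.moment_eq_zero hm k fun z ↦ by simp [hk, hjk]]
    simp [hk]
  obtain ⟨rfl, rfl⟩ | ⟨rfl, rfl⟩ : (a = j ∧ b = k) ∨ (a = k ∧ b = j) := by grind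
  · simp [hjk, ← h₂₂ a b hjk, sq, mul_mul_mul_comm]
  · rw [mul_comm (X a) (X b)]
    simp [hkj, ← h₂₂ b a hjk, sq, mul_mul_mul_comm]

end IsSignInvariant

end Moments

section MatchingPolynomials

/-- A linear functional `L` on polynomials, to be thought of as an expectation, has the moments up
to order four of an isotropic distribution that is symmetric in each coordinate: the covariance is
the identity, `μ₄` is the fourth moment of a coordinate and `μ₂₂` the mixed moment of two squared
coordinates. Moments of odd order are not constrained. -/
structure IsIsotropic {σ : Type*} [DecidableEq σ] (L : MvPolynomial σ ℝ →ₗ[ℝ] ℝ)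
    (μ₄ μ₂₂ : ℝ) : Prop where
  one : L 1 = 1
  X_mul_X : ∀ a b, L (X a * X b) = if a = b then 1 else 0
  sq_mul_X_mul_X : ∀ i a b,
    L (X i ^ 2 * (X a * X b)) = if a = b then if i = a then μ₄ else μ₂₂ else 0
  X_mul_X_mul_X_mul_X : ∀ {j k}, j ≠ k → ∀ a b, L (X j * X k * (X a * X b)) =
    μ₂₂ * ((if a = j ∧ b = k then 1 else 0) + if a = k ∧ b = j then 1 else 0)

/-- The polynomial `‖z‖² - d` on `ℝ^d`, with `‖·‖` the Euclidean norm and `d` the cardinality of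
`σ`. -/
def centeredSqNorm (σ : Type*) [Fintype σ] : MvPolynomial σ ℝ :=
  ∑ i, X i ^ 2 - C (Fintype.card σ : ℝ)

/-- The paper's `p₀`. For an isotropic weight with `η` the variance of `‖z‖²` divided by `d`, it has
mean `1` and is orthogonal to all quadratic monomials, so it extracts `f x` from `f (x + h • z)`. -/
def valuePolynomial (σ : Type*) [Fintype σ] (η : ℝ) : MvPolynomial σ ℝ :=
  1 - η⁻¹ • centeredSqNorm σ

variable {σ : Type*} [Fintype σ]

theorem even_eval_centeredSqNorm : Function.Even fun z ↦ eval z (centeredSqNorm σ) := fun z ↦ by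
  simp [centeredSqNorm]

theorem even_eval_valuePolynomial (η : ℝ) :
    Function.Even fun z ↦ eval z (valuePolynomial σ η) := fun z ↦ by
  simp [valuePolynomial, even_eval_centeredSqNorm.eq]

variable [DecidableEq σ]

/-- The paper's `p_{jk}`. It has mean `0` and, among the quadratic monomials, is orthogonal to all
but `X j * X k`, so it extracts the `(j, k)` entry of the Hessian of `f` from `f (x + h • z)`. -/
def hessianPolynomial (μ₄ μ₂₂ η : ℝ) (j k : σ) : MvPolynomial σ ℝ :=
  if j = k then
    (2 / (μ₄ - μ₂₂)) • (X j ^ 2 - 1 - ((μ₂₂ - 1) * η⁻¹) • centeredSqNorm σ)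
  else μ₂₂⁻¹ • (X j * X k)

theorem even_eval_hessianPolynomial (μ₄ μ₂₂ η : ℝ) (j k : σ) :
    Function.Even fun z ↦ eval z (hessianPolynomial μ₄ μ₂₂ η j k) := fun z ↦ by
  unfold hessianPolynomial
  split_ifs <;> simp [even_eval_centeredSqNorm.eq]

namespace IsIsotropic

variable {L : MvPolynomial σ ℝ →ₗ[ℝ] ℝ} {μ₄ μ₂₂ η : ℝ}

theorem map_centeredSqNorm (hL : IsIsotropic L μ₄ μ₂₂) : L (centeredSqNorm σ) = 0 := by
  simp only [centeredSqNorm, C_eq_smul_one, sq, map_sub, map_sum, map_smul, hL.X_mul_X, hL.one]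
  simp

theorem map_centeredSqNorm_mul (hL : IsIsotropic L μ₄ μ₂₂)
    (hη : η = μ₄ + (Fintype.card σ - 1) * μ₂₂ - Fintype.card σ) (a b : σ) :
    L (centeredSqNorm σ * (X a * X b)) = if a = b then η else 0 := by
  have hsum : ∑ i, (if i = a then μ₄ else μ₂₂) = μ₄ + (Fintype.card σ - 1) * μ₂₂ := by
    rw [sum_ite, sum_const, sum_const, filter_ne', card_erase_of_mem (mem_univ a)]
    simp [filter_eq', Nat.cast_sub (Fintype.card_pos_iff.2 ⟨a⟩)]
  simp only [centeredSqNorm, sub_mul, Finset.sum_mul, map_sub, map_sum, hL.sq_mul_X_mul_X,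
    C_mul', map_smul, hL.X_mul_X, smul_eq_mul]
  split_ifs
  · rw [hsum, hη, mul_one]
  · simp

theorem map_centeredSqNorm_sq (hL : IsIsotropic L μ₄ μ₂₂)
    (hη : η = μ₄ + (Fintype.card σ - 1) * μ₂₂ - Fintype.card σ) :
    L (centeredSqNorm σ ^ 2) = Fintype.card σ * η := by
  have hexpand : centeredSqNorm σ ^ 2 = ∑ i, centeredSqNorm σ * (X i * X i)
      - (Fintype.card σ : ℝ) • centeredSqNorm σ := by
    rw [← Finset.mul_sum, ← C_mul', mul_comm (C _), ← mul_sub, sq]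
    simp only [centeredSqNorm, sq]
  simp [hexpand, hL.map_centeredSqNorm_mul hη, hL.map_centeredSqNorm]

theorem map_valuePolynomial (hL : IsIsotropic L μ₄ μ₂₂) : L (valuePolynomial σ η) = 1 := by
  simp [valuePolynomial, hL.one, hL.map_centeredSqNorm]

theorem map_valuePolynomial_mul (hL : IsIsotropic L μ₄ μ₂₂)
    (hη : η = μ₄ + (Fintype.card σ - 1) * μ₂₂ - Fintype.card σ) (hη₀ : η ≠ 0) (a b : σ) :
    L (valuePolynomial σ η * (X a * X b)) = 0 := by
  simp [valuePolynomial, sub_mul, hL.X_mul_X, hL.map_centeredSqNorm_mul hη, hη₀]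

theorem map_hessianPolynomial (hL : IsIsotropic L μ₄ μ₂₂) (j k : σ) :
    L (hessianPolynomial μ₄ μ₂₂ η j k) = 0 := by
  unfold hessianPolynomial
  split_ifs with hjk
  · simp [sq, hL.X_mul_X, hL.one, hL.map_centeredSqNorm]
  · simp [hL.X_mul_X, hjk]

theorem map_hessianPolynomial_self_mul (hL : IsIsotropic L μ₄ μ₂₂)
    (hη : η = μ₄ + (Fintype.card σ - 1) * μ₂₂ - Fintype.card σ) (hη₀ : η ≠ 0) (hμ : μ₂₂ ≠ μ₄)
    (j a b : σ) :
    L (hessianPolynomial μ₄ μ₂₂ η j j * (X a * X b)) = if a = j ∧ b = j then 2 else 0 := by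
  have hμ' : μ₄ - μ₂₂ ≠ 0 := sub_ne_zero.2 hμ.symm
  simp only [hessianPolynomial, if_true, smul_mul_assoc, sub_mul, one_mul, map_smul, map_sub,
    hL.sq_mul_X_mul_X, hL.X_mul_X, hL.map_centeredSqNorm_mul hη, smul_eq_mul]
  rcases eq_or_ne a b with rfl | hab
  · rcases eq_or_ne j a with rfl | hja
    · simp [hη₀, hμ']
    · simp [hη₀, hja, hja.symm]
  · have : ¬(a = j ∧ b = j) := fun h ↦ hab (h.1.trans h.2.symm)
    simp [hab, this]

theorem map_hessianPolynomial_mul (hL : IsIsotropic L μ₄ μ₂₂)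
    (hη : η = μ₄ + (Fintype.card σ - 1) * μ₂₂ - Fintype.card σ) (hη₀ : η ≠ 0) (hμ₂₂ : μ₂₂ ≠ 0)
    (hμ : μ₂₂ ≠ μ₄) (j k a b : σ) :
    L (hessianPolynomial μ₄ μ₂₂ η j k * (X a * X b)) =
      (if a = j ∧ b = k then 1 else 0) + if a = k ∧ b = j then 1 else 0 := by
  rcases eq_or_ne j k with rfl | hjk
  · rw [hL.map_hessianPolynomial_self_mul hη hη₀ hμ, ← ite_add_zero, one_add_one_eq_two]
  · simp [hessianPolynomial, hjk, hL.X_mul_X_mul_X_mul_X hjk, hμ₂₂]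

end IsIsotropic

end MatchingPolynomials

section Symmetry

variable {E F : Type*} [NormedAddCommGroup E] [NormedSpace ℝ E] [NormedAddCommGroup F]
  [NormedSpace ℝ F] {f : E → F} {k : ℕ}

theorem iteratedFDeriv_two_apply_comm (hf : ContDiff ℝ 2 f) (x u v : E) :
    iteratedFDeriv ℝ 2 f x ![u, v] = iteratedFDeriv ℝ 2 f x ![v, u] := by
  have hsymm : IsSymmSndFDerivAt ℝ f x := hf.contDiffAt.isSymmSndFDerivAt (by simp)
  simpa [iteratedFDeriv_two_apply] using hsymm u v

theorem odd_iteratedFDeriv_apply_const (hk : Odd k) (x : E) :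
    Function.Odd fun z ↦ iteratedFDeriv ℝ k f x fun _ ↦ z := fun z ↦ by
  simpa [hk.neg_one_pow] using iteratedFDeriv_apply_const_smul k x z (-1)

theorem even_iteratedFDeriv_apply_const (hk : Even k) (x : E) :
    Function.Even fun z ↦ iteratedFDeriv ℝ k f x fun _ ↦ z := fun z ↦ by
  simpa [hk.neg_one_pow] using iteratedFDeriv_apply_const_smul k x z (-1)

theorem integral_eq_zero_of_odd {G : Type*} [MeasurableSpace G] [AddGroup G] [MeasurableNeg G]
    {μ : Measure G} [μ.IsNegInvariant] {g : G → F} (hg : g.Odd) : ∫ z, g z ∂μ = 0 := by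
  have hneg := integral_neg_eq_self g μ
  simp only [hg.eq, integral_neg] at hneg
  have := IsAddTorsionFree.of_isTorsionFree ℝ F
  exact neg_eq_self.1 hneg

end Symmetry

section CoordinateDerivatives

variable {σ : Type*} [Fintype σ] [DecidableEq σ] {f : (σ → ℝ) → ℝ}

theorem iteratedFDeriv_one_apply_eq_sum (x z : σ → ℝ) :
    (iteratedFDeriv ℝ 1 f x fun _ ↦ z) = ∑ a, z a * fderiv ℝ f x (Pi.single a 1) := by
  rw [iteratedFDeriv_one_apply]
  conv_lhs => rw [pi_eq_sum_univ' z]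
  simp [map_sum]

theorem iteratedFDeriv_two_apply_eq_sum (x z : σ → ℝ) :
    (iteratedFDeriv ℝ 2 f x fun _ ↦ z) = ∑ a, ∑ b, z a * z b *
      iteratedFDeriv ℝ 2 f x ![Pi.single a 1, Pi.single b 1] := by
  simp only [iteratedFDeriv_two_apply, Matrix.cons_val_zero, Matrix.cons_val_one]
  conv_lhs => rw [pi_eq_sum_univ' z]
  simp only [map_sum, map_smul, _root_.sum_apply, smul_apply, smul_eq_mul, Finset.mul_sum]
  rw [Finset.sum_comm]
  exact sum_congr rfl fun a _ ↦ sum_congr rfl fun b _ ↦ by ring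

variable {w : (σ → ℝ) → ℝ} {μ : Measure (σ → ℝ)}

theorem HasFiniteMoments.integral_mul_iteratedFDeriv_one (hw : HasFiniteMoments w μ)
    (p : MvPolynomial σ ℝ) (x : σ → ℝ) :
    ∫ z, w z * eval z p * (iteratedFDeriv ℝ 1 f x fun _ ↦ z) ∂μ =
      ∑ a, hw.moment (p * X a) * fderiv ℝ f x (Pi.single a 1) := by
  simp only [hw.moment_apply, ← integral_mul_const]
  rw [← integral_finsetSum _ fun a _ ↦ (hw.integrable_mul_eval (p * X a)).mul_const _]
  simp only [iteratedFDeriv_one_apply_eq_sum, Finset.mul_sum, eval_mul, eval_X, mul_assoc]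

theorem HasFiniteMoments.integral_mul_iteratedFDeriv_two (hw : HasFiniteMoments w μ)
    (p : MvPolynomial σ ℝ) (x : σ → ℝ) :
    ∫ z, w z * eval z p * (iteratedFDeriv ℝ 2 f x fun _ ↦ z) ∂μ =
      ∑ a, ∑ b, hw.moment (p * (X a * X b)) *
        iteratedFDeriv ℝ 2 f x ![Pi.single a 1, Pi.single b 1] := by
  have hint : ∀ a b, Integrable (fun z ↦ w z * eval z (p * (X a * X b)) *
      iteratedFDeriv ℝ 2 f x ![Pi.single a 1, Pi.single b 1]) μ := fun a b ↦
    (hw.integrable_mul_eval _).mul_const _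
  simp only [hw.moment_apply, ← integral_mul_const]
  simp only [← integral_finsetSum _ fun b _ ↦ hint _ b]
  rw [← integral_finsetSum _ fun a _ ↦ integrable_finsetSum _ fun b _ ↦ hint a b]
  simp only [iteratedFDeriv_two_apply_eq_sum, Finset.mul_sum, eval_mul, eval_X, mul_assoc]

end CoordinateDerivatives

section MomentExpansion

variable {σ : Type*} [Fintype σ] [DecidableEq σ] {f w : (σ → ℝ) → ℝ} {μ : Measure (σ → ℝ)}
  [μ.IsNegInvariant] {C : ℝ} {p : MvPolynomial σ ℝ} {ι : Type*} {l : Filter ι}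
  [l.IsCountablyGenerated] {h : ι → ℝ} {x : ι → σ → ℝ} {x₀ : σ → ℝ}

namespace HasFiniteMoments

theorem tendsto_integral_sub_of_even (hw : HasFiniteMoments w μ) (hf : ContDiff ℝ 4 f)
    (hC : ∀ y, ‖iteratedFDeriv ℝ 4 f y‖ ≤ C) (hwp : Function.Even fun z ↦ w z * eval z p)
    (hh : Tendsto h l (𝓝[≠] 0)) (hx : Tendsto x l (𝓝 x₀)) :
    Tendsto (fun i ↦ (∫ z, w z * eval z p * f (x i + h i • z) ∂μ -
        (hw.moment p * f (x i) + h i ^ 2 / 2 * ∑ a, ∑ b, hw.moment (p * (X a * X b)) *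
          iteratedFDeriv ℝ 2 f (x i) ![Pi.single a 1, Pi.single b 1])) / h i ^ 4) l
      (𝓝 (1 / 24 * ∫ z, w z * eval z p * (iteratedFDeriv ℝ 4 f x₀ fun _ ↦ z) ∂μ)) := by
  have hodd : ∀ {k} y, Odd k →
      ∫ z, w z * eval z p * (iteratedFDeriv ℝ k f y fun _ ↦ z) ∂μ = 0 := fun y hk ↦
    integral_eq_zero_of_odd (hwp.mul_odd (odd_iteratedFDeriv_apply_const hk y))
  have htaylor := tendsto_integral_taylor_remainder (n := 3) (by exact_mod_cast hf) hC
    (fun k _ ↦ hw.mul_eval p k) hh hx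
  simp only [sum_range_succ, sum_range_zero, smul_eq_mul, hodd _ odd_one,
    hodd _ (by decide : Odd 3), hw.integral_mul_iteratedFDeriv_two, iteratedFDeriv_zero_apply,
    integral_mul_const, ← hw.moment_apply] at htaylor
  convert htaylor using 2
  · simp only [Nat.factorial]
    push_cast
    ring
  · norm_num [Nat.factorial]

theorem tendsto_integral_sub_of_odd (hw : HasFiniteMoments w μ) (hf : ContDiff ℝ 3 f)
    (hC : ∀ y, ‖iteratedFDeriv ℝ 3 f y‖ ≤ C) (hwp : Function.Odd fun z ↦ w z * eval z p)
    (hh : Tendsto h l (𝓝[≠] 0)) (hx : Tendsto x l (𝓝 x₀)) :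
    Tendsto (fun i ↦ (∫ z, w z * eval z p * f (x i + h i • z) ∂μ -
        h i * ∑ a, hw.moment (p * X a) * fderiv ℝ f (x i) (Pi.single a 1)) / h i ^ 3) l
      (𝓝 (1 / 6 * ∫ z, w z * eval z p * (iteratedFDeriv ℝ 3 f x₀ fun _ ↦ z) ∂μ)) := by
  have heven : ∀ {k} y, Even k →
      ∫ z, w z * eval z p * (iteratedFDeriv ℝ k f y fun _ ↦ z) ∂μ = 0 := fun y hk ↦
    integral_eq_zero_of_odd (hwp.mul_even (even_iteratedFDeriv_apply_const hk y))
  have htaylor := tendsto_integral_taylor_remainder (n := 2) (by exact_mod_cast hf) hC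
    (fun k _ ↦ hw.mul_eval p k) hh hx
  simp only [sum_range_succ, sum_range_zero, smul_eq_mul, heven _ Even.zero, heven _ even_two,
    hw.integral_mul_iteratedFDeriv_one] at htaylor
  convert htaylor using 2
  · simp only [Nat.factorial]
    push_cast
    ring
  · norm_num [Nat.factorial]

end HasFiniteMoments

namespace IsIsotropic

variable {hw : HasFiniteMoments w μ} {μ₄ μ₂₂ η : ℝ}

theorem tendsto_integral_valuePolynomial (hL : IsIsotropic hw.moment μ₄ μ₂₂)
    (hη : η = μ₄ + (Fintype.card σ - 1) * μ₂₂ - Fintype.card σ) (hη₀ : η ≠ 0)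
    (hw_even : w.Even) (hf : ContDiff ℝ 4 f) (hC : ∀ y, ‖iteratedFDeriv ℝ 4 f y‖ ≤ C)
    (hh : Tendsto h l (𝓝[≠] 0)) (hx : Tendsto x l (𝓝 x₀)) :
    Tendsto (fun i ↦ (∫ z, w z * eval z (valuePolynomial σ η) * f (x i + h i • z) ∂μ -
        f (x i)) / h i ^ 4) l
      (𝓝 (1 / 24 * ∫ z, w z * eval z (valuePolynomial σ η) *
        (iteratedFDeriv ℝ 4 f x₀ fun _ ↦ z) ∂μ)) := by
  simpa [hL.map_valuePolynomial, hL.map_valuePolynomial_mul hη hη₀] using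
    hw.tendsto_integral_sub_of_even hf hC
      (hw_even.mul_even (even_eval_valuePolynomial η)) hh hx

theorem tendsto_integral_coord (hL : IsIsotropic hw.moment μ₄ μ₂₂) (hw_even : w.Even)
    (hf : ContDiff ℝ 3 f) (hC : ∀ y, ‖iteratedFDeriv ℝ 3 f y‖ ≤ C)
    (hh : Tendsto h l (𝓝[≠] 0)) (hx : Tendsto x l (𝓝 x₀)) (j : σ) :
    Tendsto (fun i ↦ (∫ z, w z * z j * f (x i + h i • z) ∂μ -
        h i * fderiv ℝ f (x i) (Pi.single j 1)) / h i ^ 3) l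
      (𝓝 (1 / 6 * ∫ z, w z * z j * (iteratedFDeriv ℝ 3 f x₀ fun _ ↦ z) ∂μ)) := by
  simpa [hL.X_mul_X] using
    hw.tendsto_integral_sub_of_odd (p := X j) hf hC (hw_even.mul_odd fun z ↦ by simp) hh hx

theorem tendsto_integral_hessianPolynomial (hL : IsIsotropic hw.moment μ₄ μ₂₂)
    (hη : η = μ₄ + (Fintype.card σ - 1) * μ₂₂ - Fintype.card σ) (hη₀ : η ≠ 0) (hμ₂₂ : μ₂₂ ≠ 0)
    (hμ : μ₂₂ ≠ μ₄) (hw_even : w.Even) (hf : ContDiff ℝ 4 f)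
    (hC : ∀ y, ‖iteratedFDeriv ℝ 4 f y‖ ≤ C) (hh : Tendsto h l (𝓝[≠] 0))
    (hx : Tendsto x l (𝓝 x₀)) (j k : σ) :
    Tendsto (fun i ↦ (∫ z, w z * eval z (hessianPolynomial μ₄ μ₂₂ η j k) *
        f (x i + h i • z) ∂μ -
        h i ^ 2 * iteratedFDeriv ℝ 2 f (x i) ![Pi.single j 1, Pi.single k 1]) / h i ^ 4) l
      (𝓝 (1 / 24 * ∫ z, w z * eval z (hessianPolynomial μ₄ μ₂₂ η j k) *
        (iteratedFDeriv ℝ 4 f x₀ fun _ ↦ z) ∂μ)) := by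
  have hsum : ∀ y, ∑ a, ∑ b, hw.moment (hessianPolynomial μ₄ μ₂₂ η j k * (X a * X b)) *
      iteratedFDeriv ℝ 2 f y ![Pi.single a 1, Pi.single b 1] =
        2 * iteratedFDeriv ℝ 2 f y ![Pi.single j 1, Pi.single k 1] := fun y ↦ by
    simp [hL.map_hessianPolynomial_mul hη hη₀ hμ₂₂ hμ, add_mul, sum_add_distrib, ite_and,
      iteratedFDeriv_two_apply_comm (hf.of_le (by norm_num)) y (Pi.single k 1), two_mul]
  have hlim := hw.tendsto_integral_sub_of_even hf hC
    (hw_even.mul_even (even_eval_hessianPolynomial μ₄ μ₂₂ η j k)) hh hx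
  simp only [hL.map_hessianPolynomial, hsum, zero_mul, zero_add] at hlim
  simpa only [← mul_assoc, div_mul_cancel₀ _ (two_ne_zero' ℝ)] using hlim

end IsIsotropic

end MomentExpansion

section Nondegeneracy

theorem integral_mul_sq_pos {α : Type*} [MeasurableSpace α] {μ : Measure α} {w g : α → ℝ}
    (hw : ∀ z, 0 ≤ w z) (hw₀ : ∫ z, w z ∂μ ≠ 0) (hg : ∀ᵐ z ∂μ, g z ≠ 0)
    (hint : Integrable (fun z ↦ w z * g z ^ 2) μ) : 0 < ∫ z, w z * g z ^ 2 ∂μ := by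
  have hnonneg : ∀ z, 0 ≤ w z * g z ^ 2 := fun z ↦ mul_nonneg (hw z) (sq_nonneg _)
  refine (integral_nonneg hnonneg).lt_of_ne' fun hzero ↦ hw₀ (integral_eq_zero_of_ae ?_)
  filter_upwards [(integral_eq_zero_iff_of_nonneg hnonneg hint).1 hzero, hg] with z hz hgz
  simpa [hgz] using hz

variable {σ : Type*} [Fintype σ]

theorem ae_eval_centeredSqNorm_ne_zero [Nonempty σ] :
    ∀ᵐ z : σ → ℝ, eval z (centeredSqNorm σ) ≠ 0 := by
  have hcard : 0 < √(Fintype.card σ : ℝ) := by positivity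
  have hsphere : ∀ᵐ y : EuclideanSpace ℝ σ, y ∉ Metric.sphere 0 √(Fintype.card σ) :=
    measure_eq_zero_iff_ae_notMem.1 (Measure.addHaar_sphere_of_ne_zero _ 0 hcard.ne')
  filter_upwards [(PiLp.volume_preserving_toLp σ).quasiMeasurePreserving.ae hsphere] with z hz
  contrapose! hz
  have hsum : ∑ i, z i ^ 2 = Fintype.card σ := by
    simpa [centeredSqNorm, sub_eq_zero] using hz
  simp [EuclideanSpace.norm_eq, hsum]

theorem IsIsotropic.fourthMoment_excess_pos [DecidableEq σ] [Nonempty σ] {w : (σ → ℝ) → ℝ}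
    {hw : HasFiniteMoments w volume} {μ₄ μ₂₂ : ℝ} (hL : IsIsotropic hw.moment μ₄ μ₂₂)
    (hpos : ∀ z, 0 ≤ w z) : 0 < μ₄ + (Fintype.card σ - 1) * μ₂₂ - Fintype.card σ := by
  have hone : ∫ z, w z = 1 := by simpa [hw.moment_apply] using hL.one
  have hint := hw.integrable_mul_eval (centeredSqNorm σ ^ 2)
  simp only [eval_pow] at hint
  have hvar : 0 < hw.moment (centeredSqNorm σ ^ 2) := by
    simp only [hw.moment_apply, eval_pow]
    exact integral_mul_sq_pos hpos (hone ▸ one_ne_zero) ae_eval_centeredSqNorm_ne_zero hint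
  rw [hL.map_centeredSqNorm_sq rfl] at hvar
  exact pos_of_mul_pos_right hvar (Nat.cast_nonneg _)

end Nondegeneracy

section Kernel

variable {σ : Type*} [Fintype σ] [DecidableEq σ] {w : (σ → ℝ) → ℝ}

theorem IsSignInvariant.isIsotropic_moment (hw : IsSignInvariant w)
    (hm : HasFiniteMoments w volume) {μ₄ μ₂₂ : ℝ} (hw₀ : ∫ z, w z = 1)
    (hw₂ : ∀ i j, ∫ z, w z * z i * z j = if i = j then 1 else 0)
    (h₄ : ∀ i, μ₄ = ∫ z, w z * z i ^ 4)
    (h₂₂ : ∀ i j, i ≠ j → μ₂₂ = ∫ z, w z * z i ^ 2 * z j ^ 2) :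
    IsIsotropic hm.moment μ₄ μ₂₂ := by
  have h₄' : ∀ i, hm.moment (X i ^ 4) = μ₄ := fun i ↦ by simp [hm.moment_apply, h₄ i]
  have h₂₂' : ∀ i j, i ≠ j → hm.moment (X i ^ 2 * X j ^ 2) = μ₂₂ := fun i j hij ↦ by
    simp [hm.moment_apply, h₂₂ i j hij, mul_assoc]
  exact {
    one := by simp [hm.moment_apply, hw₀]
    X_mul_X := fun a b ↦ by simp [hm.moment_apply, ← hw₂, mul_assoc]
    sq_mul_X_mul_X := hw.moment_sq_mul_X_mul_X hm h₄' h₂₂'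
    X_mul_X_mul_X_mul_X := hw.moment_X_mul_X_mul_X_mul_X hm h₂₂' }

variable {d : ℕ}

theorem euclNorm_sq (z : Vec d) : euclNorm z ^ 2 = ∑ i, z i ^ 2 :=
  Real.sq_sqrt (sum_nonneg fun _ _ ↦ sq_nonneg _)

theorem norm_le_euclNorm (z : Vec d) : ‖z‖ ≤ euclNorm z :=
  (pi_norm_le_iff_of_nonneg (Real.sqrt_nonneg _)).2 fun i ↦
    Real.abs_le_sqrt (single_le_sum (fun j _ ↦ sq_nonneg (z j)) (mem_univ i))

theorem eval_centeredSqNorm (z : Vec d) : eval z (centeredSqNorm (Fin d)) = euclNorm z ^ 2 - d := by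
  simp [centeredSqNorm, euclNorm_sq]

theorem hasFiniteMoments_of_integrable_mul_euclNorm_rpow {w : Vec d → ℝ} (hw : Integrable w)
    (hmom : ∀ r : ℝ, 0 < r → Integrable fun z ↦ w z * euclNorm z ^ r) :
    HasFiniteMoments w volume := by
  intro k
  rcases k.eq_zero_or_pos with rfl | hk
  · simpa using hw
  have hmeas : AEStronglyMeasurable (fun z ↦ ‖z‖ ^ k * w z) :=
    (continuous_norm.pow k).aestronglyMeasurable.mul hw.aestronglyMeasurable
  refine (hmom k (Nat.cast_pos.2 hk)).norm.mono' hmeas (ae_of_all _ fun z ↦ ?_)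
  have hz := norm_le_euclNorm z
  rw [Real.rpow_natCast, norm_mul, norm_mul, norm_pow, norm_pow, norm_norm, mul_comm,
    Real.norm_of_nonneg ((norm_nonneg z).trans hz)]
  gcongr

end Kernel

theorem statement5_general {d : ℕ} {f : Vec d → ℝ} (hf : ContDiff ℝ 4 f) {C₃ C₄ : ℝ}
    (hf₃ : ∀ y, ‖iteratedFDeriv ℝ 3 f y‖ ≤ C₃) (hf₄ : ∀ y, ‖iteratedFDeriv ℝ 4 f y‖ ≤ C₄)
    {K : Vec d → ℝ} (hKmom : HasFiniteMoments K volume) (hKsign : IsSignInvariant K)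
    (hK0 : ∫ z, K z = 1) (hK2 : ∀ i j, ∫ z, K z * z i * z j = if i = j then 1 else 0)
    {μ4 μ22 η : ℝ} (hμ4 : ∀ i, μ4 = ∫ z, K z * z i ^ 4)
    (hμ22 : ∀ i j, i ≠ j → μ22 = ∫ z, K z * z i ^ 2 * z j ^ 2)
    (hμne : μ22 ≠ μ4) (hμ22ne : μ22 ≠ 0) (hη : η = μ4 + (d - 1) * μ22 - d) (hηne : η ≠ 0)
    {p0 : Vec d → ℝ} (hp0 : ∀ z, p0 z = 1 - η⁻¹ * (euclNorm z ^ 2 - d))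
    {pjk : Fin d → Fin d → Vec d → ℝ} (hpjk : ∀ j k z, pjk j k z =
      if j = k then 2 / (μ4 - μ22) * (z j ^ 2 - 1 - (μ22 - 1) * η⁻¹ * (euclNorm z ^ 2 - d))
      else μ22⁻¹ * z j * z k)
    {ι : Type*} {l : Filter ι} [l.IsCountablyGenerated] {h : ι → ℝ} (hh : Tendsto h l (𝓝[≠] 0))
    {x : ι → Vec d} {x_o : Vec d} (hx : Tendsto x l (𝓝 x_o)) :
    Tendsto (fun n ↦ ((∫ z, K z * p0 z * f (x n + h n • z)) - f (x n)) / h n ^ 4) l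
      (𝓝 (1 / 24 * ∫ z, K z * p0 z * dirDeriv 4 f x_o z)) ∧
    (∀ j, Tendsto (fun n ↦ ((∫ z, K z * z j * f (x n + h n • z)) -
        h n * fderiv ℝ f (x n) (Pi.single j 1)) / h n ^ 3) l
      (𝓝 (1 / 6 * ∫ z, K z * z j * dirDeriv 3 f x_o z))) ∧
    ∀ j k, Tendsto (fun n ↦ ((∫ z, K z * pjk j k z * f (x n + h n • z)) -
        h n ^ 2 * iteratedFDeriv ℝ 2 f (x n) ![Pi.single j 1, Pi.single k 1]) / h n ^ 4) l
      (𝓝 (1 / 24 * ∫ z, K z * pjk j k z * dirDeriv 4 f x_o z)) := by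
  have hL : IsIsotropic hKmom.moment μ4 μ22 :=
    hKsign.isIsotropic_moment hKmom hK0 hK2 hμ4 hμ22
  have hη' : η = μ4 + (Fintype.card (Fin d) - 1) * μ22 - Fintype.card (Fin d) := by simpa using hη
  obtain rfl : p0 = fun z ↦ eval z (valuePolynomial (Fin d) η) := by
    ext z
    simp [hp0, valuePolynomial, eval_centeredSqNorm]
  obtain rfl : pjk = fun j k z ↦ eval z (hessianPolynomial μ4 μ22 η j k) := by
    ext j k z
    rw [hpjk, hessianPolynomial, apply_ite (eval z)]
    simp [eval_centeredSqNorm, mul_assoc]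
  exact ⟨hL.tendsto_integral_valuePolynomial hη' hηne hKsign.even hf hf₄ hh hx,
    hL.tendsto_integral_coord hKsign.even (hf.of_le (by norm_num)) hf₃ hh hx,
    hL.tendsto_integral_hessianPolynomial hη' hηne hμ22ne hμne hKsign.even hf hf₄ hh hx⟩

/-- bias expansions for the local moment matching estimators with
polynomials `p₀`, `p_j(z) = z_j` and `p_{jk}`. -/
theorem statement5 {d : ℕ} (hd : 1 ≤ d)
    (f : Vec d → ℝ) (hf : ContDiff ℝ (4 : ℕ∞) f)
    (hfb : ∀ n : ℕ, n ≤ 4 → ∃ C : ℝ, ∀ x : Vec d, ‖iteratedFDeriv ℝ n f x‖ ≤ C)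
    (hfpos : ∀ x, 0 ≤ f x) (hfint : (∫ x : Vec d, f x) = 1)
    (K : Vec d → ℝ) (hKmeas : Measurable K) (hKpos : ∀ z, 0 ≤ K z)
    (hKbd : ∃ C : ℝ, ∀ z, K z ≤ C)
    (hKmom : ∀ r : ℝ, 0 < r → Integrable (fun z => K z * euclNorm z ^ r))
    (hK0 : (∫ z : Vec d, K z) = 1)
    (hK1 : ∀ (ξ : Vec d), (∀ i, ξ i = 1 ∨ ξ i = -1) → ∀ (σ : Equiv.Perm (Fin d)),
      ∀ z : Vec d, K z = K fun i => ξ i * z (σ i))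
    (hK2 : ∀ i j : Fin d, (∫ z : Vec d, K z * z i * z j) = if i = j then 1 else 0)
    (μ4 μ22 η : ℝ)
    (hμ4 : ∀ i : Fin d, μ4 = ∫ z : Vec d, K z * z i ^ 4)
    (hμ22 : ∀ i j : Fin d, i ≠ j → μ22 = ∫ z : Vec d, K z * z i ^ 2 * z j ^ 2)
    (hμ22' : d = 1 → μ22 = 1)
    (hμgt : μ22 < μ4) (hμpos : 0 < μ22)
    (hη : η = μ4 + (d - 1) * μ22 - d)
    (p0 : Vec d → ℝ) (hp0 : ∀ z, p0 z = 1 - η⁻¹ * (euclNorm z ^ 2 - d))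
    (pjk : Fin d → Fin d → Vec d → ℝ)
    (hpjk : ∀ j k z, pjk j k z =
      if j = k then 2 / (μ4 - μ22) * (z j ^ 2 - 1 - (μ22 - 1) * η⁻¹ * (euclNorm z ^ 2 - d))
      else μ22⁻¹ * z j * z k)
    (x_o : Vec d) (h : ℕ → ℝ) (hh : ∀ n, 0 < h n) (hh0 : Tendsto h atTop (𝓝 0))
    (x : ℕ → Vec d) (hx : Tendsto x atTop (𝓝 x_o)) :
    -- (i)
    (Tendsto
      (fun n => ((∫ z : Vec d, K z * p0 z * f (x n + h n • z)) - f (x n)) / h n ^ 4)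
      atTop (𝓝 ((1 / 24) * ∫ z : Vec d, K z * p0 z * dirDeriv 4 f x_o z))) ∧
    -- (ii)
    (∀ j : Fin d, Tendsto
      (fun n => ((∫ z : Vec d, K z * z j * f (x n + h n • z)) -
        h n * fderiv ℝ f (x n) (Pi.single j 1)) / h n ^ 3)
      atTop (𝓝 ((1 / 6) * ∫ z : Vec d, K z * z j * dirDeriv 3 f x_o z))) ∧
    -- (iii)
    (∀ j k : Fin d, Tendsto
      (fun n => ((∫ z : Vec d, K z * pjk j k z * f (x n + h n • z)) -
        h n ^ 2 * iteratedFDeriv ℝ 2 f (x n) ![Pi.single j 1, Pi.single k 1]) / h n ^ 4)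
      atTop (𝓝 ((1 / 24) * ∫ z : Vec d, K z * pjk j k z * dirDeriv 4 f x_o z))) := by
  have hKint : Integrable K := .of_integral_ne_zero (hK0 ▸ one_ne_zero)
  have hKmom' := hasFiniteMoments_of_integrable_mul_euclNorm_rpow hKint hKmom
  have hKsign : IsSignInvariant K := fun ξ hξ z ↦ (hK1 ξ hξ 1 z).symm
  have : Nonempty (Fin d) := ⟨⟨0, hd⟩⟩
  have hηpos : 0 < η := by
    have hL := hKsign.isIsotropic_moment hKmom' hK0 hK2 hμ4 hμ22
    simpa [hη] using hL.fourthMoment_excess_pos hKpos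
  obtain ⟨C₃, hf₃⟩ := hfb 3 (by norm_num)
  obtain ⟨C₄, hf₄⟩ := hfb 4 le_rfl
  exact statement5_general (by exact_mod_cast hf) hf₃ hf₄ hKmom' hKsign hK0 hK2 hμ4 hμ22 hμgt.ne
    hμpos.ne' hη hηpos.ne' hp0 hpjk
    (tendsto_nhdsWithin_iff.2 ⟨hh0, .of_forall fun n ↦ (hh n).ne'⟩) hx
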